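/- arXiv:2003.03656 — 4 statements merged into one kernel-verified Lean document; each statement's English description precedes it below -/
import Mathlib

section
/- For every δ ∈ (0,1) there exist a constant c = c(δ) > 0 and q₀ such that for every prime power q ≥ q₀ and every real p with q^{−3/2} < p < 1, a p-random subset Q of F² satisfies a(Q) ≥ c · q^{1/2} with probability at least 1 − δ. -/
/-!
The proof is the deletion method, applied to the random points lying in an explicit set.

Write `s = √q` and fix `ε = δ / 12`. Let `S` be the union of `m` translated parabolas
`y = x² + a`, where `m = ⌈ε / (s p)⌉ ≤ q`, so that the expected number `|S| p = q m p` of random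
points in `S` is at least `ε s`. By Chebyshev's inequality `Q` contains at least half of this
expectation with probability at least `1 - 4 / (ε s)` (`measure_card_le_half`).

A line meets a parabola in at most two points, so a single parabola is an arc, and in general `S`
has at most `2 q² m³` ordered collinear triples (`card_badTriples_le`). When `m ≥ 2` one has
`m p ≤ 2 ε / s`, hence the expected number of collinear triples inside `Q ∩ S` is at most
`16 ε³ s ≤ δ ε s / 8`; by Markov's inequality it is below `ε s / 4` with probability at least
`1 - δ / 2` (`measure_badTriples_ge`). Deleting one point from each collinear triple leaves an arc
in `Q` of size at least `ε s / 2 - ε s / 4` (`card_sub_card_le_maxArc`). Working inside `S`, whose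
size is adapted to `p`, makes a monotone coupling between different values of `p` unnecessary.
-/

open Finset MeasureTheory
open scoped NNReal ENNReal

/-- A set `P` in the affine plane over `F` is an arc if it contains no three
distinct collinear points. -/
def IsArc (F : Type*) [Field F] (P : Set (F × F)) : Prop :=
  ∀ a ∈ P, ∀ b ∈ P, ∀ c ∈ P,
    a ≠ b → a ≠ c → b ≠ c → ¬ Collinear F ({a, b, c} : Set (F × F))

/-- `numArcs F k` is the number of `k`-element arcs in `F²`. -/
noncomputable def numArcs (F : Type*) [Field F] [Fintype F] (k : ℕ) : ℕ :=
  Nat.card {s : Finset (F × F) // s.card = k ∧ IsArc F ↑s}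

/-- `maxArc F P` is the maximum cardinality of an arc contained in `P`. -/
noncomputable def maxArc (F : Type*) [Field F] (P : Finset (F × F)) : ℕ :=
  sSup {k : ℕ | ∃ s : Finset (F × F), s ⊆ P ∧ s.card = k ∧ IsArc F ↑s}

/-- `numCollinearTriples F P` is the number of 3-element collinear subsets of `P`. -/
noncomputable def numCollinearTriples (F : Type*) [Field F] (P : Finset (F × F)) : ℕ :=
  Nat.card {s : Finset (F × F) // s ⊆ P ∧ s.card = 3 ∧ Collinear F (↑s : Set (F × F))}

/-- `P` contains no `l` distinct collinear points. -/
def NoLCollinear (F : Type*) [Field F] (l : ℕ) (P : Finset (F × F)) : Prop :=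
  ∀ s : Finset (F × F), s ⊆ P → s.card = l → ¬ Collinear F (↑s : Set (F × F))

/-- The product Bernoulli(p) measure on subsets of `F²` (encoded as functions
`F × F → Bool`): each point is included independently with probability `p`. -/
noncomputable def randomMeasure (F : Type*) [Field F] [Fintype F] (p : ℝ≥0) (hp : p ≤ 1) :
    Measure ((F × F) → Bool) :=
  Measure.pi fun _ => (PMF.bernoulli p (by exact_mod_cast hp)).toMeasure

/-- The subset of `F²` corresponding to an indicator function `Q : F × F → Bool`. -/
noncomputable def toSubset {F : Type*} [Field F] [Fintype F] (Q : (F × F) → Bool) :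
    Finset (F × F) := Finset.univ.filter fun x => Q x = true

/-- `L` is an affine line in `F²`, i.e. the affine span of two distinct points. -/
def IsAffineLine (F : Type*) [Field F] (L : Set (F × F)) : Prop :=
  ∃ a b : F × F, a ≠ b ∧ L = (affineSpan F {a, b} : Set (F × F))

open ProbabilityTheory

open scoped Classical in
/-- The union of the translated parabolas `y = x² + a`, `a ∈ A`. -/
noncomputable def parabolas {F : Type} [Field F] [Fintype F] (A : Finset F) : Finset (F × F) :=
  Finset.univ.filter fun z => z.2 - z.1 ^ 2 ∈ A

open scoped Classical in
/-- The ordered triples of distinct collinear points of `S`. -/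
noncomputable def badTriples {F : Type} [Field F] [Fintype F] (S : Finset (F × F)) :
    Finset ((F × F) × (F × F) × (F × F)) :=
  Finset.univ.filter fun t => (t.1 ∈ S ∧ t.2.1 ∈ S ∧ t.2.2 ∈ S) ∧
    (t.1 ≠ t.2.1 ∧ t.1 ≠ t.2.2 ∧ t.2.1 ≠ t.2.2) ∧
    Collinear F ({t.1, t.2.1, t.2.2} : Set (F × F))

open scoped Classical in
/-- The ordered triples of distinct collinear points of `S` that lie in the random set `Q`. -/
noncomputable def chosenTriples {F : Type} [Field F] [Fintype F] (S : Finset (F × F))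
    (Q : F × F → Bool) : Finset ((F × F) × (F × F) × (F × F)) :=
  (badTriples S).filter fun t => Q t.1 = true ∧ Q t.2.1 = true ∧ Q t.2.2 = true

/-! ### Parabolas and collinear triples -/

section Geometry

variable {F : Type} [Field F]

lemma det_eq_of_collinear {a b c : F × F} (h : Collinear F ({a, b, c} : Set (F × F))) :
    (c.1 - a.1) * (b.2 - a.2) = (c.2 - a.2) * (b.1 - a.1) := by
  obtain ⟨v, hv⟩ := (collinear_iff_of_mem (p₀ := a) (by simp)).1 h
  obtain ⟨r, hr⟩ := hv b (by simp)
  obtain ⟨t, ht⟩ := hv c (by simp)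
  rw [hr, ht]
  simp only [vadd_eq_add, Prod.fst_add, Prod.snd_add, Prod.smul_fst, Prod.smul_snd, smul_eq_mul]
  ring

/-- A polynomial of degree at most two with three distinct roots has vanishing leading
coefficients. -/
lemma quadratic_three_roots {u v w x y z : F} (hxy : x ≠ y) (hxz : x ≠ z) (hyz : y ≠ z)
    (hx : u * x ^ 2 + v * x + w = 0) (hy : u * y ^ 2 + v * y + w = 0)
    (hz : u * z ^ 2 + v * z + w = 0) : u = 0 ∧ v = 0 := by
  have h1 : u * (x + y) + v = 0 := by
    apply mul_left_cancel₀ (sub_ne_zero.2 hxy)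
    linear_combination hx - hy
  have h2 : u * (x + z) + v = 0 := by
    apply mul_left_cancel₀ (sub_ne_zero.2 hxz)
    linear_combination hx - hz
  have hu : u = 0 := by
    apply mul_left_cancel₀ (sub_ne_zero.2 hyz)
    linear_combination h1 - h2
  refine ⟨hu, ?_⟩
  rw [hu] at h1
  linear_combination h1

/-- The line through two distinct points `a`, `b` does not meet the parabola `y = x² + s` in three
distinct points. -/
lemma line_parabola {a b c d e : F × F} {s : F} (hab : a ≠ b)
    (hc : (c.1 - a.1) * (b.2 - a.2) = (c.2 - a.2) * (b.1 - a.1))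
    (hd : (d.1 - a.1) * (b.2 - a.2) = (d.2 - a.2) * (b.1 - a.1))
    (he : (e.1 - a.1) * (b.2 - a.2) = (e.2 - a.2) * (b.1 - a.1))
    (hcs : c.2 - c.1 ^ 2 = s) (hds : d.2 - d.1 ^ 2 = s) (hes : e.2 - e.1 ^ 2 = s)
    (hcd : c ≠ d) (hce : c ≠ e) (hde : d ≠ e) : False := by
  have key : ∀ {x y : F × F}, x.2 - x.1 ^ 2 = s → y.2 - y.1 ^ 2 = s → x ≠ y → x.1 ≠ y.1 := by
    intro x y hx hy hne h
    refine hne (Prod.ext h ?_)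
    rw [h] at hx
    linear_combination hx - hy
  obtain ⟨h1, h2⟩ := quadratic_three_roots
    (u := b.1 - a.1) (v := -(b.2 - a.2))
    (w := (s - a.2) * (b.1 - a.1) + a.1 * (b.2 - a.2))
    (key hcs hds hcd) (key hcs hes hce) (key hds hes hde)
    (by linear_combination -hc - (b.1 - a.1) * hcs)
    (by linear_combination -hd - (b.1 - a.1) * hds)
    (by linear_combination -he - (b.1 - a.1) * hes)
  refine hab (Prod.ext ?_ ?_)
  · linear_combination -h1
  · linear_combination h2

variable [Fintype F]

lemma card_parabolas (A : Finset F) : (parabolas A).card = Fintype.card F * A.card := by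
  classical
  rw [← Finset.card_univ, ← Finset.card_product]
  refine Finset.card_bij' (fun z _ => (z.1, z.2 - z.1 ^ 2)) (fun z _ => (z.1, z.2 + z.1 ^ 2))
    ?_ ?_ ?_ ?_
  · intro z hz
    simpa [parabolas] using hz
  · intro z hz
    simpa [parabolas] using hz
  · intro z _
    simp
  · intro z _
    simp

lemma card_badTriples_le (A : Finset F) :
    (badTriples (parabolas A)).card ≤ 2 * (Fintype.card F ^ 2 * A.card ^ 3) := by
  classical
  have h := Finset.card_le_mul_card_image_of_maps_to
    (s := badTriples (parabolas A)) (t := parabolas A ×ˢ parabolas A ×ˢ A)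
    (f := fun t => (t.1, t.2.1, t.2.2.2 - t.2.2.1 ^ 2)) ?_ 2 ?_
  · refine h.trans (le_of_eq ?_)
    rw [Finset.card_product, Finset.card_product, card_parabolas]
    ring
  · rintro ⟨a, b, c⟩ ht
    simp only [badTriples, Finset.mem_filter, Finset.mem_univ, true_and] at ht
    obtain ⟨⟨ha, hb, hc⟩, -, -⟩ := ht
    simp only [Finset.mem_product]
    exact ⟨ha, hb, by simpa [parabolas] using hc⟩
  · rintro ⟨a, b, s⟩ -
    by_contra! hlt
    obtain ⟨⟨a1, b1, c⟩, h1, ⟨a2, b2, d⟩, h2, ⟨a3, b3, e⟩, h3, h12, h13, h23⟩ :=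
      Finset.two_lt_card.1 hlt
    simp only [badTriples, Finset.mem_filter, Finset.mem_univ, true_and, Prod.mk.injEq]
      at h1 h2 h3
    obtain ⟨⟨-, ⟨hab, -, -⟩, hc⟩, rfl, rfl, hcs⟩ := h1
    obtain ⟨⟨-, -, hd⟩, rfl, rfl, hds⟩ := h2
    obtain ⟨⟨-, -, he⟩, rfl, rfl, hes⟩ := h3
    exact line_parabola hab (det_eq_of_collinear hc) (det_eq_of_collinear hd)
      (det_eq_of_collinear he) hcs hds hes (by simpa using h12) (by simpa using h13)
      (by simpa using h23)

/-- A single parabola is an arc. -/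
lemma badTriples_eq_empty {A : Finset F} (hA : A.card = 1) : badTriples (parabolas A) = ∅ := by
  classical
  obtain ⟨s, rfl⟩ := Finset.card_eq_one.1 hA
  rw [Finset.eq_empty_iff_forall_notMem]
  rintro ⟨a, b, c⟩ ht
  simp only [badTriples, parabolas, Finset.mem_filter, Finset.mem_univ, true_and,
    Finset.mem_singleton] at ht
  obtain ⟨⟨ha, hb, hc⟩, ⟨hab, hac, hbc⟩, hcol⟩ := ht
  exact line_parabola hab (by ring) (by ring) (det_eq_of_collinear hcol) ha hb hc hab hac hbc

/-- Deletion: removing the first point of every chosen collinear triple leaves an arc. -/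
lemma card_sub_card_le_maxArc (S : Finset (F × F)) (Q : F × F → Bool) :
    (S.filter fun x => Q x = true).card ≤
      maxArc F (toSubset Q) + (chosenTriples S Q).card := by
  classical
  set B := (chosenTriples S Q).image fun t => t.1 with hB
  set R := (S.filter fun x => Q x = true) \ B with hR
  have hle : R.card ≤ maxArc F (toSubset Q) := by
    refine le_csSup ⟨(toSubset Q).card, ?_⟩ ⟨R, ?_, rfl, ?_⟩
    · rintro k ⟨s, hs, rfl, -⟩
      exact Finset.card_le_card hs
    · intro x hx
      simp only [hR, Finset.mem_sdiff, Finset.mem_filter] at hx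
      simp [toSubset, hx.1.2]
    · intro a ha b hb c hc hab hac hbc hcol
      simp only [hR, Finset.coe_sdiff, Set.mem_sdiff, Finset.mem_coe, Finset.mem_filter]
        at ha hb hc
      refine ha.2 (Finset.mem_image.2 ⟨(a, b, c), ?_, rfl⟩)
      simp only [chosenTriples, badTriples, Finset.mem_filter, Finset.mem_univ, true_and]
      exact ⟨⟨⟨ha.1.1, hb.1.1, hc.1.1⟩, ⟨hab, hac, hbc⟩, hcol⟩, ha.1.2, hb.1.2, hc.1.2⟩
  have h1 : (S.filter fun x => Q x = true).card ≤ R.card + B.card :=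
    Finset.card_le_card_sdiff_add_card
  have h2 : B.card ≤ (chosenTriples S Q).card := Finset.card_image_le
  omega

end Geometry

/-! ### Tail bounds -/

section Probability

variable {F : Type} [Field F] [Fintype F] (p : ℝ≥0) (hp : p ≤ 1)

instance isProbabilityMeasure_randomMeasure : IsProbabilityMeasure (randomMeasure F p hp) := by
  unfold randomMeasure
  infer_instance

lemma randomMeasure_all_mem (s : Finset (F × F)) :
    randomMeasure F p hp {Q | ∀ x ∈ s, Q x = true} = (p : ℝ≥0∞) ^ s.card := by
  classical
  have hset : {Q : F × F → Bool | ∀ x ∈ s, Q x = true} =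
      Set.univ.pi fun x => if x ∈ s then {true} else Set.univ := by
    ext Q
    simp only [Set.mem_ofPred_eq, Set.mem_pi, Set.mem_univ, true_implies]
    refine forall_congr' fun x => ?_
    by_cases hx : x ∈ s <;> simp [hx]
  have hone : ∀ x : F × F, (PMF.bernoulli p hp).toMeasure
      (if x ∈ s then ({true} : Set Bool) else Set.univ) = if x ∈ s then (p : ℝ≥0∞) else 1 := by
    intro x
    by_cases hx : x ∈ s
    · simp only [hx, if_true]
      rw [PMF.toMeasure_apply_singleton _ _ (measurableSet_singleton _)]
      simp [PMF.bernoulli]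
    · simp only [hx, if_false]
      exact measure_univ
  rw [hset, randomMeasure, Measure.pi_pi, Finset.prod_congr rfl fun x _ => hone x]
  simp [Finset.prod_ite_mem]

lemma measure_badTriples_ge (S : Finset (F × F)) {t : ℝ} (ht : 0 < t) :
    randomMeasure F p hp {Q | t ≤ ((chosenTriples S Q).card : ℝ)} ≤
      ENNReal.ofReal ((badTriples S).card * (p : ℝ) ^ 3 / t) := by
  classical
  set μ := randomMeasure F p hp
  let E : (F × F) × (F × F) × (F × F) → Set (F × F → Bool) := fun d =>
    {Q | Q d.1 = true ∧ Q d.2.1 = true ∧ Q d.2.2 = true}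
  let f : (F × F → Bool) → ℝ≥0∞ := fun Q => ∑ d ∈ badTriples S, (E d).indicator 1 Q
  have hf : ∀ Q, f Q = ((chosenTriples S Q).card : ℝ≥0∞) := by
    intro Q
    simp [f, E, chosenTriples, Set.indicator_apply]
  have hE : ∀ d ∈ badTriples S, μ (E d) = (p : ℝ≥0∞) ^ 3 := by
    rintro ⟨a, b, c⟩ hd
    simp only [badTriples, Finset.mem_filter, Finset.mem_univ, true_and] at hd
    obtain ⟨-, ⟨hab, hac, hbc⟩, -⟩ := hd
    have h := randomMeasure_all_mem p hp ({a, b, c} : Finset (F × F))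
    rw [Finset.card_eq_three.2 ⟨a, b, c, hab, hac, hbc, rfl⟩] at h
    rw [← h]
    congr 1
    ext Q
    simp [E]
  have hint : ∫⁻ Q, f Q ∂μ = ((badTriples S).card : ℝ≥0∞) * (p : ℝ≥0∞) ^ 3 := by
    simp only [f]
    rw [lintegral_finsetSum _ fun d _ => Measurable.of_discrete]
    rw [Finset.sum_congr rfl fun d hd => (lintegral_indicator_one
      (MeasurableSet.of_discrete)).trans (hE d hd)]
    simp
  have hsub : {Q | t ≤ ((chosenTriples S Q).card : ℝ)} ⊆ {Q | ENNReal.ofReal t ≤ f Q} := by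
    intro Q hQ
    simp only [Set.mem_ofPred_eq] at hQ ⊢
    rw [hf, ← ENNReal.ofReal_natCast]
    exact ENNReal.ofReal_le_ofReal hQ
  refine (measure_mono hsub).trans ((meas_ge_le_lintegral_div
    (Measurable.of_discrete).aemeasurable (by simpa using ht) ENNReal.ofReal_ne_top).trans ?_)
  rw [hint, ENNReal.ofReal_div_of_pos ht, ENNReal.ofReal_mul (by positivity),
    ENNReal.ofReal_pow (by positivity)]
  simp

lemma measure_card_le_half (S : Finset (F × F)) (hS : 0 < (S.card : ℝ) * p) :
    randomMeasure F p hp {Q | ((S.filter fun x => Q x = true).card : ℝ) ≤ S.card * p / 2} ≤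
      ENNReal.ofReal (4 / (S.card * p)) := by
  classical
  set μ := randomMeasure F p hp with hμ
  let g : Bool → ℝ := fun b => if b = true then 1 else 0
  let Y : F × F → (F × F → Bool) → ℝ := fun x Q => g (Q x)
  have hind : iIndepFun Y μ := by
    exact iIndepFun_pi (X := fun _ : F × F => g) fun _ => Measurable.of_discrete.aemeasurable
  have hL : ∀ x, MemLp (Y x) 2 μ := fun x => MemLp.of_discrete
  have hmean : ∀ x, μ[Y x] = (p : ℝ) := by
    intro x
    have h : Y x = ({Q | Q x = true} : Set (F × F → Bool)).indicator 1 := by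
      ext Q
      simp [Y, g, Set.indicator_apply]
    have h2 := randomMeasure_all_mem p hp ({x} : Finset (F × F))
    simp only [Finset.mem_singleton, forall_eq, Finset.card_singleton, pow_one] at h2
    rw [h, integral_indicator_one MeasurableSet.of_discrete, measureReal_def, hμ, h2]
    simp
  have hvar : ∀ x, variance (Y x) μ ≤ p := by
    intro x
    refine (variance_le_expectation_sq (hL x).aestronglyMeasurable).trans (le_of_eq ?_)
    rw [← hmean x]
    congr 1
    ext Q
    by_cases h : Q x = true <;> simp [Y, g, h]
  have hsumvar : variance (∑ x ∈ S, Y x) μ ≤ S.card * p := by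
    rw [IndepFun.variance_sum (fun x _ => hL x) fun x _ y _ hxy => hind.indepFun hxy]
    refine (Finset.sum_le_sum fun x _ => hvar x).trans ?_
    simp
  have hsummean : μ[∑ x ∈ S, Y x] = (S.card : ℝ) * (p : ℝ) := by
    simp only [Finset.sum_apply]
    rw [integral_finsetSum _ fun x _ => (hL x).integrable (by norm_num)]
    simp [hmean]
  have hcard : ∀ Q, (∑ x ∈ S, Y x) Q = ((S.filter fun x => Q x = true).card : ℝ) := by
    intro Q
    simp [Y, g]
  have hcheb := meas_ge_le_variance_div_sq (μ := μ) (X := ∑ x ∈ S, Y x)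
    (memLp_finsetSum' S fun x _ => hL x) (half_pos hS)
  refine (measure_mono ?_).trans (hcheb.trans (ENNReal.ofReal_le_ofReal ?_))
  · intro Q hQ
    simp only [Set.mem_ofPred_eq] at hQ ⊢
    rw [hsummean, hcard, abs_sub_comm]
    refine le_trans ?_ (le_abs_self _)
    linarith
  · rw [div_le_div_iff₀ (by positivity) hS]
    nlinarith [mul_le_mul_of_nonneg_right hsumvar hS.le]

end Probability

/-! ### The lower bound -/

/-- The choice of the number `m` of parabolas, with `s = √q`. -/
lemma exists_number_of_parabolas {δ s p : ℝ} {q : ℕ} (hδ : 0 < δ) (hδ1 : δ < 1) (hs : 0 < s)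
    (hq : (q : ℝ) = s ^ 2) (hp : 0 < p) (hsp : 1 < s ^ 3 * p) :
    ∃ m : ℕ, m ≤ q ∧ δ / 12 * s ≤ q * m * p ∧
      (m = 1 ∨ 2 * ((q : ℝ) ^ 2 * m ^ 3) * p ^ 3 ≤ δ / 2 * (δ / 12 * s / 4)) := by
  set ε := δ / 12 with hε
  have hε0 : 0 < ε := by positivity
  have hspos : 0 < s * p := mul_pos hs hp
  refine ⟨⌈ε / (s * p)⌉₊, ?_, ?_, ?_⟩
  · refine Nat.ceil_le.2 ?_
    rw [hq, div_le_iff₀ hspos]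
    nlinarith
  · have h := Nat.le_ceil (ε / (s * p))
    rw [div_le_iff₀ hspos] at h
    rw [hq]
    nlinarith
  · set m := ⌈ε / (s * p)⌉₊ with hm
    have hm0 : 0 < m := Nat.ceil_pos.2 (by positivity)
    by_cases h1 : m = 1
    · exact Or.inl h1
    right
    have hbig : 1 < ε / (s * p) := by
      by_contra! hle
      exact h1 (le_antisymm (Nat.ceil_le.2 (by simpa using hle)) hm0)
    have hlt : (m : ℝ) < ε / (s * p) + 1 := Nat.ceil_lt_add_one (by positivity)
    have hm2 : (m : ℝ) * (s * p) ≤ 2 * ε := by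
      have : (m : ℝ) ≤ 2 * ε / (s * p) := by
        rw [mul_div_assoc]
        linarith
      rwa [le_div_iff₀ hspos] at this
    have hcube : ((m : ℝ) * (s * p)) ^ 3 ≤ (2 * ε) ^ 3 := by gcongr
    calc 2 * ((q : ℝ) ^ 2 * m ^ 3) * p ^ 3 = 2 * s * ((m : ℝ) * (s * p)) ^ 3 := by
          rw [hq]
          ring
      _ ≤ 2 * s * (2 * ε) ^ 3 := by gcongr
      _ ≤ δ / 2 * (ε * s / 4) := by
          have : 0 ≤ ε * s * (δ * (1 - δ)) := by
            have : 0 ≤ 1 - δ := by linarith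
            positivity
          have h2 : 0 ≤ ε * s * δ ^ 2 := by positivity
          have h3 : 2 * s * (2 * ε) ^ 3 = ε * s * δ ^ 2 / 9 := by
            rw [hε]
            ring
          rw [h3]
          nlinarith

theorem random_arc_lower :
    ∀ δ : ℝ, 0 < δ → δ < 1 → ∃ c : ℝ, 0 < c ∧ ∃ q₀ : ℕ,
      ∀ (F : Type) [Field F] [Fintype F], q₀ ≤ Fintype.card F →
      ∀ (p : ℝ≥0) (hp : p ≤ 1),
      (Fintype.card F : ℝ) ^ (-(3 : ℝ) / 2) < (p : ℝ) → (p : ℝ) < 1 →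
      1 - ENNReal.ofReal δ ≤
        randomMeasure F p hp
          {Q | c * Real.sqrt (Fintype.card F) ≤ (maxArc F (toSubset Q) : ℝ)} := by
  intro δ hδ hδ1
  -- `q₀` is chosen so that the Chebyshev error `4 / (δ / 12 * √q)` is at most `δ / 2`.
  refine ⟨δ / 48, by positivity, ⌈(96 / δ ^ 2) ^ 2⌉₊, ?_⟩
  intro F _ _ hq p hp hpq _
  have hq0 : (0 : ℝ) < Fintype.card F := by exact_mod_cast Fintype.card_pos
  set s := Real.sqrt (Fintype.card F) with hs
  have hs0 : 0 < s := Real.sqrt_pos.2 hq0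
  have hqs : (Fintype.card F : ℝ) = s ^ 2 := (Real.sq_sqrt hq0.le).symm
  have hsbig : 96 / δ ^ 2 ≤ s := Real.le_sqrt_of_sq_le (Nat.ceil_le.1 hq)
  have hpow : (Fintype.card F : ℝ) ^ (-(3 : ℝ) / 2) = (s ^ 3)⁻¹ := by
    rw [hqs, ← Real.rpow_natCast s 2, ← Real.rpow_mul hs0.le, ← Real.rpow_natCast s 3,
      ← Real.rpow_neg hs0.le]
    norm_num
  rw [hpow] at hpq
  have hp0 : 0 < (p : ℝ) := lt_trans (by positivity) hpq
  have hsp : 1 < s ^ 3 * p := by rwa [inv_lt_iff_one_lt_mul₀' (by positivity)] at hpq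
  obtain ⟨m, hmq, hmean, htriples⟩ := exists_number_of_parabolas hδ hδ1 hs0 hqs hp0 hsp
  obtain ⟨A, -, hA⟩ := Finset.exists_subset_card_eq (s := (Finset.univ : Finset F))
    (by simpa using hmq)
  have hScard : ((parabolas A).card : ℝ) = Fintype.card F * m := by
    rw [card_parabolas, hA]
    push_cast
    rfl
  have hbad : ((badTriples (parabolas A)).card : ℝ) * (p : ℝ) ^ 3 ≤
      δ / 2 * (δ / 12 * s / 4) := by
    rcases htriples with h | h
    · rw [badTriples_eq_empty (hA.trans h)]
      simp only [Finset.card_empty, Nat.cast_zero, zero_mul]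
      positivity
    · refine le_trans ?_ h
      gcongr
      have := card_badTriples_le A
      rw [hA] at this
      exact_mod_cast this
  rw [← hScard] at hmean
  have hpos : 0 < δ / 12 * s := by positivity
  have ht : 0 < δ / 12 * s / 4 := by positivity
  have h1 := measure_card_le_half p hp (parabolas A) (hpos.trans_le hmean)
  have h2 := measure_badTriples_ge p hp (parabolas A) ht
  set E := {Q | δ / 48 * s ≤ (maxArc F (toSubset Q) : ℝ)} with hE
  have hsub : Eᶜ ⊆
      {Q | (((parabolas A).filter fun x => Q x = true).card : ℝ) ≤ (parabolas A).card * p / 2} ∪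
      {Q | δ / 12 * s / 4 ≤ ((chosenTriples (parabolas A) Q).card : ℝ)} := by
    intro Q hQ
    by_contra hcon
    simp only [hE, Set.mem_compl_iff, Set.mem_union, Set.mem_ofPred_eq, not_or, not_le]
      at hQ hcon
    have h : (((parabolas A).filter fun x => Q x = true).card : ℝ) ≤
        maxArc F (toSubset Q) + (chosenTriples (parabolas A) Q).card := by
      exact_mod_cast card_sub_card_le_maxArc (parabolas A) Q
    linarith [hcon.1, hcon.2]
  have hcompl : randomMeasure F p hp Eᶜ ≤ ENNReal.ofReal δ := by
    refine (measure_mono hsub).trans ((measure_union_le _ _).trans ?_)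
    have hhalf : ENNReal.ofReal δ = ENNReal.ofReal (δ / 2) + ENNReal.ofReal (δ / 2) := by
      rw [← ENNReal.ofReal_add (by positivity) (by positivity), add_halves]
    rw [hhalf]
    refine add_le_add (h1.trans (ENNReal.ofReal_le_ofReal ?_))
      (h2.trans (ENNReal.ofReal_le_ofReal ?_))
    · rw [div_le_iff₀ (hpos.trans_le hmean)]
      rw [div_le_iff₀ (by positivity)] at hsbig
      nlinarith
    · rw [div_le_iff₀ ht]
      exact hbad
  rw [tsub_le_iff_right]
  calc (1 : ℝ≥0∞) = randomMeasure F p hp (E ∪ Eᶜ) := by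
        rw [Set.union_compl_self, measure_univ]
    _ ≤ randomMeasure F p hp E + randomMeasure F p hp Eᶜ := measure_union_le _ _
    _ ≤ _ := by gcongr
end

section
/- For every finite field F and every finite subset P ⊆ F² with T(P) ≥ |P|/2, one has a(P) ≥ |P|^{3/2} / (2√2 · T(P)^{1/2}). -/
/-!
The proof is the deletion method. Keep each point of `P` independently with probability `p`, and
delete one point from every collinear triple that survives. What remains is an arc, of expected
size at least `p * n - p ^ 3 * T`, where `n = |P|` and `T` is the number of collinear triples.
The choice `p = √(n / (2 * T))`, at most `1` because `n / 2 ≤ T`, makes this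
`p * n / 2 = n ^ (3/2) / (2 * √2 * √T)`.

The random subset is represented by the explicit weights `p ^ |S| * (1 - p) ^ |P \ S|` on the
powerset of `P`. The lemma `sum_weight_superset` computes the probability that the random subset
contains a given set, `exists_subset_of_expectation` is the averaging step, and
`le_maxArc_of_deletion` is the deletion step.
-/

open Finset MeasureTheory
open scoped NNReal ENNReal

/-- The random subset of `P` with density `p` contains a given `A ⊆ P` with probability
`p ^ |A|`. -/
lemma sum_weight_superset {α : Type*} [DecidableEq α] (P A : Finset α) (hA : A ⊆ P) (p : ℝ) :
    ∑ S ∈ P.powerset, p ^ S.card * (1 - p) ^ (P \ S).card * (if A ⊆ S then (1 : ℝ) else 0)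
      = p ^ A.card := by
  -- Expand `∏ i ∈ P, (p + g i)`, where `g` vanishes on `A` and equals `1 - p` elsewhere:
  -- the factor at `i` is `p` on `A` and `1` off `A`.
  have key := Finset.prod_add (fun _ : α => p) (fun i => if i ∈ A then 0 else 1 - p) P
  have hl : ∏ i ∈ P, (p + if i ∈ A then 0 else 1 - p) = p ^ A.card := by
    have h1 : ∀ i ∈ P, (p + if i ∈ A then 0 else 1 - p) = if i ∈ A then p else 1 := by
      intro i _
      split_ifs <;> ring
    rw [Finset.prod_congr rfl h1, Finset.prod_ite_mem, Finset.inter_eq_right.2 hA,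
      Finset.prod_const]
  rw [← hl, key]
  refine Finset.sum_congr rfl fun S _ => ?_
  rw [Finset.prod_const, mul_assoc]
  congr 1
  by_cases hAS : A ⊆ S
  · have h2 : ∀ i ∈ P \ S, (if i ∈ A then 0 else 1 - p) = 1 - p := by
      intro i hi
      rw [if_neg fun hiA => (Finset.mem_sdiff.1 hi).2 (hAS hiA)]
    rw [if_pos hAS, mul_one, Finset.prod_congr rfl h2, Finset.prod_const]
  · obtain ⟨i, hiA, hiS⟩ := Finset.not_subset.1 hAS
    rw [if_neg hAS, mul_zero]
    symm
    exact Finset.prod_eq_zero (Finset.mem_sdiff.2 ⟨hA hiA, hiS⟩) (by simp [hiA])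

/-- Averaging over the random subset of density `p`: for a family `H` of triples in `P`, some
`S ⊆ P` has at least the expected value of the number of points minus the number of members of
`H` inside `S`. -/
lemma exists_subset_of_expectation {α : Type*} [DecidableEq α] (P : Finset α)
    (H : Finset (Finset α)) (hH : ∀ t ∈ H, t ⊆ P ∧ t.card = 3) (p : ℝ) (hp0 : 0 ≤ p)
    (hp1 : p ≤ 1) :
    ∃ S ⊆ P, p * P.card - p ^ 3 * H.card ≤ (S.card : ℝ) - (H.filter (· ⊆ S)).card := by
  set w : Finset α → ℝ := fun S => p ^ S.card * (1 - p) ^ (P \ S).card with hw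
  have hw0 : ∀ S, 0 ≤ w S := fun S =>
    mul_nonneg (pow_nonneg hp0 _) (pow_nonneg (sub_nonneg.2 hp1) _)
  have hw1 : ∑ S ∈ P.powerset, w S = 1 := by
    simpa using sum_weight_superset P ∅ (Finset.empty_subset _) p
  have hpts : ∑ S ∈ P.powerset, w S * (S.card : ℝ) = p * P.card := by
    have h1 : ∀ S ∈ P.powerset, w S * (S.card : ℝ)
        = ∑ x ∈ P, w S * (if {x} ⊆ S then (1 : ℝ) else 0) := by
      intro S hS
      rw [← Finset.mul_sum]
      simp [Finset.inter_eq_right.2 (Finset.mem_powerset.1 hS)]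
    rw [Finset.sum_congr rfl h1, Finset.sum_comm]
    rw [Finset.sum_congr rfl fun x hx =>
      sum_weight_superset P {x} (Finset.singleton_subset_iff.2 hx) p]
    simp [mul_comm]
  have htri : ∑ S ∈ P.powerset, w S * ((H.filter (· ⊆ S)).card : ℝ) = p ^ 3 * H.card := by
    have h1 : ∀ S ∈ P.powerset, w S * ((H.filter (· ⊆ S)).card : ℝ)
        = ∑ t ∈ H, w S * (if t ⊆ S then (1 : ℝ) else 0) := by
      intro S _
      rw [← Finset.mul_sum]
      simp
    rw [Finset.sum_congr rfl h1, Finset.sum_comm]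
    rw [Finset.sum_congr rfl fun t ht => sum_weight_superset P t (hH t ht).1 p]
    rw [Finset.sum_congr rfl fun t ht => by rw [(hH t ht).2]]
    simp [mul_comm]
  by_contra! hcon
  obtain ⟨S₀, hS₀, hpos⟩ : ∃ S ∈ P.powerset, 0 < w S := by
    by_contra! hle
    linarith [Finset.sum_nonpos hle]
  have hlt : ∑ S ∈ P.powerset, w S * ((S.card : ℝ) - (H.filter (· ⊆ S)).card)
      < ∑ S ∈ P.powerset, w S * (p * P.card - p ^ 3 * H.card) :=
    Finset.sum_lt_sum
      (fun S hS => mul_le_mul_of_nonneg_left (hcon S (Finset.mem_powerset.1 hS)).le (hw0 S))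
      ⟨S₀, hS₀, mul_lt_mul_of_pos_left (hcon S₀ (Finset.mem_powerset.1 hS₀)) hpos⟩
  rw [← Finset.sum_mul, hw1, one_mul] at hlt
  simp only [mul_sub, Finset.sum_sub_distrib] at hlt
  rw [hpts, htri] at hlt
  exact lt_irrefl _ hlt

/-- Deleting one point from each collinear triple inside `S ⊆ P` leaves an arc. The family `H`
need only contain every collinear triple of `P`. -/
lemma le_maxArc_of_deletion {F : Type*} [Field F] [DecidableEq (F × F)] (P : Finset (F × F))
    (H : Finset (Finset (F × F))) (hH3 : ∀ t ∈ H, t.card = 3)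
    (hH : ∀ t : Finset (F × F), t ⊆ P → t.card = 3 → Collinear F (t : Set (F × F)) → t ∈ H)
    (S : Finset (F × F)) (hS : S ⊆ P) :
    S.card ≤ maxArc F P + (H.filter (· ⊆ S)).card := by
  have hne : ∀ t : Finset (F × F), ∃ x, t ∈ H → x ∈ t := by
    intro t
    by_cases ht : t ∈ H
    · obtain ⟨x, hx⟩ := Finset.card_pos.1 (by rw [hH3 t ht]; norm_num : 0 < t.card)
      exact ⟨x, fun _ => hx⟩
    · exact ⟨0, fun h => absurd h ht⟩
  choose f hf using hne
  set D := (H.filter (· ⊆ S)).image f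
  have harc : IsArc F (↑(S \ D) : Set (F × F)) := by
    intro a ha b hb c hc hab hac hbc hcol
    have hsub : ({a, b, c} : Finset (F × F)) ⊆ S \ D := by
      intro x hx
      simp only [Finset.mem_insert, Finset.mem_singleton] at hx
      rcases hx with rfl | rfl | rfl <;> assumption
    have hsubS := hsub.trans Finset.sdiff_subset
    have hmem : ({a, b, c} : Finset (F × F)) ∈ H :=
      hH _ (hsubS.trans hS) (Finset.card_eq_three.2 ⟨a, b, c, hab, hac, hbc, rfl⟩)
        (by simpa using hcol)
    exact (Finset.mem_sdiff.1 (hsub (hf _ hmem))).2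
      (Finset.mem_image_of_mem f (Finset.mem_filter.2 ⟨hmem, hsubS⟩))
  have hle : (S \ D).card ≤ maxArc F P := by
    refine le_csSup ⟨P.card, ?_⟩ ⟨S \ D, Finset.sdiff_subset.trans hS, rfl, harc⟩
    rintro k ⟨s, hs, rfl, -⟩
    exact Finset.card_le_card hs
  have h1 : D.card ≤ (H.filter (· ⊆ S)).card := Finset.card_image_le
  have h2 := Finset.le_card_sdiff D S
  omega

theorem arc_from_few_triples (F : Type) [Field F] (P : Finset (F × F))
    (h : (P.card : ℝ) / 2 ≤ (numCollinearTriples F P : ℝ)) :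
    (P.card : ℝ) ^ ((3 : ℝ) / 2) /
        (2 * Real.sqrt 2 * Real.sqrt (numCollinearTriples F P)) ≤
      (maxArc F P : ℝ) := by
  classical
  set H := (P.powersetCard 3).filter
    fun t : Finset (F × F) => Collinear F (t : Set (F × F)) with hHdef
  have hmem : ∀ t : Finset (F × F), t ∈ H ↔ t ⊆ P ∧ t.card = 3 ∧ Collinear F (t : Set (F × F)) := by
    intro t
    rw [hHdef, Finset.mem_filter, Finset.mem_powersetCard, and_assoc]
  have hT : numCollinearTriples F P = H.card := Nat.subtype_card H hmem
  rw [hT] at h ⊢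
  rcases Nat.eq_zero_or_pos H.card with h0 | hpos
  -- With no collinear triples the left-hand side is a division by zero, hence `0`.
  · rw [h0]
    simp
  have hTpos : (0 : ℝ) < H.card := by exact_mod_cast hpos
  have hn0 : (0 : ℝ) ≤ P.card := Nat.cast_nonneg _
  generalize hTd : (H.card : ℝ) = T at *
  generalize hnd : (P.card : ℝ) = n at *
  set p := √(n / (2 * T)) with hp
  have hp0 : 0 ≤ p := Real.sqrt_nonneg _
  have hp1 : p ≤ 1 := by
    rw [hp, Real.sqrt_le_one, div_le_one (by positivity)]
    linarith
  have hp2 : p ^ 2 * T = n / 2 := by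
    rw [hp, Real.sq_sqrt (by positivity)]
    field_simp
  obtain ⟨S, hS, hge⟩ := exists_subset_of_expectation P H
    (fun t ht => ⟨((hmem t).1 ht).1, ((hmem t).1 ht).2.1⟩) p hp0 hp1
  have hdel := le_maxArc_of_deletion P H (fun t ht => ((hmem t).1 ht).2.1)
    (fun t h1 h2 h3 => (hmem t).2 ⟨h1, h2, h3⟩) S hS
  have hdel' : (S.card : ℝ) ≤ maxArc F P + ((H.filter (· ⊆ S)).card : ℝ) := by
    exact_mod_cast hdel
  rw [hTd, hnd] at hge
  have hval : p * n - p ^ 3 * T = p * n / 2 := by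
    linear_combination (-p) * hp2
  have hpow : n ^ ((3 : ℝ) / 2) = n * √n := by
    rcases hn0.eq_or_lt with rfl | hn
    · norm_num
    · rw [show (3 : ℝ) / 2 = 1 + 1 / 2 by norm_num, Real.rpow_add hn, Real.rpow_one,
        Real.sqrt_eq_rpow]
  have hlhs : n ^ ((3 : ℝ) / 2) / (2 * √2 * √T) = p * n / 2 := by
    rw [hpow, hp, Real.sqrt_div hn0, Real.sqrt_mul (by norm_num : (0 : ℝ) ≤ 2)]
    have hs : 0 < √T := Real.sqrt_pos.2 hTpos
    field_simp
  linarith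
end

section
/- For every δ > 0 there exist constants c > 0 and q₀ such that for every prime power q ≥ q₀ there exists a set P ⊆ F² with |P| ≥ c · q^{2/3} such that P contains no four distinct collinear points and a(P) ≤ |P|^{3/4 + δ}. -/
/-!
Write `q = |F|`. The set `P` is obtained by the deletion method from a random set of
`n ≈ q^(2/3) / 2` points of `F²`. There are at most `q^6` collinear quadruples, so about `n⁴ / q²`
of them, at most `n / 4`, are expected in the random set; deleting a point from each one costs at
most half of the set. It remains to see that the random set contains no arc with
`k ≈ q^(1/2 + δ/3)` points, for which a union bound over all `k`-arcs suffices once these are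
counted.

The count (`card_arcs_le`) is a graph container argument. Fix `s` points `S` of an arc, and join two
points of the plane when the line through them meets `S`. The other points of the arc form an
independent set in this graph. The graph is dense on every set `U` with more than `4q` points: for
each `p ∈ S` the `q + 1` lines through `p` cut `U` into few classes, which gives about `|U|² / q`
ordered pairs collinear with `p`, and a pair is counted for at most two points `p` because `S` is an
arc. Hence some vertex of `U` has at least `s |U| / (8q)` neighbours in `U`
(`exists_high_degree`). By the Kleitman–Winston algorithm (`card_indepSets_le`), after selecting
`f` further points, with `s f / (8q) ≥ log q`, only `4q` candidates are left for the rest of the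
arc. Taking `f = s` slightly above `q^(1/2)` and `k = 10 s`, there are at most
`(q²)^s (q² + 4q)^s (4q)^(8s)` arcs with `k` points, far fewer than `(q² / n)^k`.
-/

open Finset MeasureTheory
open scoped NNReal ENNReal

/-! ### Random subsets of fixed size -/

theorem choose_sub_mul_pow_le {N n : ℕ} (hn : n ≤ N) :
    ∀ k ≤ n, (N - k).choose (n - k) * N ^ k ≤ N.choose n * n ^ k := by
  intro k
  induction k with
  | zero => simp
  | succ k ih =>
    intro hk
    have ih := ih (by omega)
    obtain ⟨a, rfl⟩ : ∃ a, N = a + (k + 1) := ⟨N - (k + 1), by omega⟩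
    obtain ⟨b, rfl⟩ : ∃ b, n = b + (k + 1) := ⟨n - (k + 1), by omega⟩
    have e1 : a + (k + 1) - k = a + 1 := by omega
    have e2 : b + (k + 1) - k = b + 1 := by omega
    rw [e1, e2] at ih
    rw [Nat.add_sub_cancel, Nat.add_sub_cancel]
    have h := Nat.add_one_mul_choose_eq a b
    have hab : b ≤ a := by omega
    refine Nat.le_of_mul_le_mul_left ?_ (Nat.add_one_pos a)
    have h3 : (b + 1) * (a + (k + 1)) ≤ (a + 1) * (b + (k + 1)) := by nlinarith
    calc (a + 1) * (a.choose b * (a + (k + 1)) ^ (k + 1))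
        = ((a + 1) * a.choose b) * (a + (k + 1)) ^ k * (a + (k + 1)) := by ring
      _ = ((a + 1).choose (b + 1) * (a + (k + 1)) ^ k) * ((b + 1) * (a + (k + 1))) := by
          rw [h]; ring
      _ ≤ ((a + (k + 1)).choose (b + (k + 1)) * (b + (k + 1)) ^ k) *
            ((a + 1) * (b + (k + 1))) := Nat.mul_le_mul ih h3
      _ = _ := by ring

/-- A uniformly random `n`-subset of an `N`-set contains a given `K` with probability at most
`(n / N) ^ |K|`. -/
theorem card_supersets_mul_le {V : Type*} [Fintype V] [DecidableEq V] (n : ℕ)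
    (hn : n ≤ Fintype.card V) (K : Finset V) :
    #{P ∈ powersetCard n (univ : Finset V) | K ⊆ P} * Fintype.card V ^ #K
      ≤ (Fintype.card V).choose n * n ^ #K := by
  by_cases hk : #K ≤ n
  · refine le_trans (Nat.mul_le_mul_right _ ?_) (choose_sub_mul_pow_le hn _ hk)
    have : #(powersetCard (n - #K) (univ \ K)) = (Fintype.card V - #K).choose (n - #K) := by
      rw [card_powersetCard, card_sdiff_of_subset (subset_univ _), card_univ]
    rw [← this]
    refine card_le_card_of_injOn (fun P => P \ K) ?_ ?_
    · intro P hP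
      simp only [coe_filter, mem_powersetCard, Set.mem_ofPred_eq, subset_univ, true_and] at hP
      simp only [mem_coe, mem_powersetCard]
      exact ⟨sdiff_subset_sdiff (subset_univ _) le_rfl, by
        rw [card_sdiff_of_subset hP.2, hP.1]⟩
    · intro P hP Q hQ h
      simp only [coe_filter, mem_powersetCard, Set.mem_ofPred_eq, subset_univ, true_and] at hP hQ
      simp only at h
      rw [← sdiff_union_of_subset hP.2, h, sdiff_union_of_subset hQ.2]
  · have : #{P ∈ powersetCard n (univ : Finset V) | K ⊆ P} = 0 := by
      rw [card_eq_zero, filter_eq_empty_iff]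
      intro P hP hKP
      have := card_le_card hKP
      rw [(mem_powersetCard.1 hP).2] at this
      exact hk this
    rw [this]; simp

theorem sum_card_contained_mul_le {V : Type*} [Fintype V] [DecidableEq V] (n k : ℕ)
    (hn : n ≤ Fintype.card V) (X : Finset (Finset V)) (hX : ∀ K ∈ X, #K = k) :
    (∑ P ∈ powersetCard n (univ : Finset V), #{K ∈ X | K ⊆ P}) * Fintype.card V ^ k
      ≤ #X * ((Fintype.card V).choose n * n ^ k) := by
  have h : ∑ P ∈ powersetCard n (univ : Finset V), #{K ∈ X | K ⊆ P}
      = ∑ K ∈ X, #{P ∈ powersetCard n (univ : Finset V) | K ⊆ P} := by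
    simp only [card_filter]
    exact sum_comm
  rw [h, sum_mul, ← smul_eq_mul, ← sum_const]
  refine sum_le_sum fun K hK => ?_
  have := card_supersets_mul_le n hn K
  rwa [hX K hK] at this

/-- First moment argument: if a random `n`-set is expected to contain at most `n / 4` members of
`X` and at most `1 / 4` members of `Y`, then some `n`-set contains at most `n / 2` members of `X`
and no member of `Y`. -/
theorem exists_good_subset {V : Type*} [Fintype V] [DecidableEq V] (n k l : ℕ)
    (hn : n ≤ Fintype.card V) (hn0 : 0 < n) (X Y : Finset (Finset V))
    (hX : ∀ K ∈ X, #K = l) (hY : ∀ K ∈ Y, #K = k)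
    (hXc : 4 * (#X * n ^ l) ≤ n * Fintype.card V ^ l)
    (hYc : 4 * (#Y * n ^ k) ≤ Fintype.card V ^ k) :
    ∃ P : Finset V, #P = n ∧ 2 * #{K ∈ X | K ⊆ P} ≤ n ∧ ∀ K ∈ Y, ¬ K ⊆ P := by
  have hNpos : 0 < Fintype.card V := lt_of_lt_of_le hn0 hn
  set D := (Fintype.card V).choose n with hD
  have hDpos : 0 < D := Nat.choose_pos hn
  have h1 := sum_card_contained_mul_le n l hn X hX
  have h2 := sum_card_contained_mul_le n k hn Y hY
  have hS1 : 4 * ∑ P ∈ powersetCard n (univ : Finset V), #{K ∈ X | K ⊆ P} ≤ n * D := by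
    refine Nat.le_of_mul_le_mul_right ?_ (pow_pos hNpos l)
    nlinarith [Nat.mul_le_mul_left D hXc]
  have hS2 : 4 * ∑ P ∈ powersetCard n (univ : Finset V), #{K ∈ Y | K ⊆ P} ≤ D := by
    refine Nat.le_of_mul_le_mul_right ?_ (pow_pos hNpos k)
    nlinarith [Nat.mul_le_mul_left D hYc]
  by_contra hcon
  push Not at hcon
  have hlow : ∀ P ∈ powersetCard n (univ : Finset V),
      n + 1 ≤ 2 * (#{K ∈ X | K ⊆ P} + n * #{K ∈ Y | K ⊆ P}) := by
    intro P hP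
    by_cases hx : 2 * #{K ∈ X | K ⊆ P} ≤ n
    · obtain ⟨K, hK, hKP⟩ := hcon P (mem_powersetCard.1 hP).2 hx
      have : 0 < #{K ∈ Y | K ⊆ P} := card_pos.2 ⟨K, by simp [hK, hKP]⟩
      nlinarith
    · have : 0 ≤ n * #{K ∈ Y | K ⊆ P} := Nat.zero_le _
      omega
  have hsum := sum_le_sum hlow
  rw [sum_const, card_powersetCard, card_univ, smul_eq_mul, ← hD, ← mul_sum, sum_add_distrib,
    ← mul_sum] at hsum
  nlinarith [Nat.mul_le_mul_left n hS2]

/-! ### Counting independent sets by the graph container method -/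

/-- The `j`-element subsets of `U` that are independent for the relation `r`. -/
noncomputable def indepSets {V : Type*} (r : V → V → Prop) (U : Finset V) (j : ℕ) :
    Finset (Finset V) := by
  classical
  exact {I ∈ powersetCard j U | ∀ x ∈ I, ∀ y ∈ I, x ≠ y → ¬ r x y}

theorem mem_indepSets {V : Type*} {r : V → V → Prop} {U : Finset V} {j : ℕ} {I : Finset V} :
    I ∈ indepSets r U j ↔ (I ⊆ U ∧ #I = j) ∧ ∀ x ∈ I, ∀ y ∈ I, x ≠ y → ¬ r x y := by
  classical
  simp [indepSets, mem_powersetCard]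

theorem card_indepSets_le_pow {V : Type*} (r : V → V → Prop) (U : Finset V) (j R : ℕ)
    (hU : #U ≤ R) : #(indepSets r U j) ≤ R ^ j := by
  classical
  calc #(indepSets r U j) ≤ #(powersetCard j U) := card_le_card (by
        intro I hI; rw [mem_indepSets] at hI; exact mem_powersetCard.2 hI.1)
    _ = (#U).choose j := card_powersetCard _ _
    _ ≤ #U ^ j := Nat.choose_le_pow _ _
    _ ≤ R ^ j := Nat.pow_le_pow_left hU j

open Classical in
/-- Independent sets either avoid `v`, or consist of `v` and an independent set of non-neighbours
of `v`. -/
theorem card_indepSets_le_add {V : Type*} (r : V → V → Prop) (U : Finset V) (j : ℕ) (v : V) :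
    #(indepSets r U (j + 1)) ≤ #(indepSets r (U.erase v) (j + 1)) +
      #(indepSets r {y ∈ U | y ≠ v ∧ ¬ r v y} j) := by
  have hsub : indepSets r U (j + 1) ⊆ indepSets r (U.erase v) (j + 1) ∪
      (indepSets r {y ∈ U | y ≠ v ∧ ¬ r v y} j).image (insert v) := by
    intro I hI
    rw [mem_indepSets] at hI
    obtain ⟨⟨hIU, hIc⟩, hind⟩ := hI
    by_cases hv : v ∈ I
    · refine mem_union_right _ (mem_image.2 ⟨I.erase v, ?_, insert_erase hv⟩)
      refine mem_indepSets.2 ⟨⟨fun y hy => ?_, by rw [card_erase_of_mem hv, hIc]; rfl⟩,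
        fun x hx y hy => hind x (mem_of_mem_erase hx) y (mem_of_mem_erase hy)⟩
      have hyI := mem_of_mem_erase hy
      have hyv := ne_of_mem_erase hy
      exact mem_filter.2 ⟨hIU hyI, hyv, hind v hv y hyI hyv.symm⟩
    · refine mem_union_left _ (mem_indepSets.2 ⟨⟨fun y hy => ?_, hIc⟩, hind⟩)
      exact mem_erase.2 ⟨fun h => hv (h ▸ hy), hIU hy⟩
  exact (card_le_card hsub).trans ((card_union_le _ _).trans
    (Nat.add_le_add_left card_image_le _))

open Classical in
/-- Kleitman–Winston bound. If every vertex set with more than `R` elements has a vertex whose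
non-neighbourhood in the set is at most a `ρ`-fraction of the set, then after `f` selected
vertices the remaining candidates number at most `R`; each of the `f` selections costs a factor
`N + R`, and every later vertex a factor `R`. -/
theorem card_indepSets_le {V : Type*} (r : V → V → Prop) (U₀ : Finset V) (N R : ℕ) (ρ : ℝ)
    (hρ : 0 < ρ) (hN : #U₀ ≤ N)
    (hdeg : ∀ U ⊆ U₀, R < #U → ∃ v ∈ U, (#{y ∈ U | y ≠ v ∧ ¬ r v y} : ℝ) ≤ ρ * #U) :
    ∀ f m : ℕ, ∀ U ⊆ U₀, (#U : ℝ) * ρ ^ f ≤ R →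
      #(indepSets r U (f + m)) ≤ (N + R) ^ f * R ^ m := by
  intro f
  induction f with
  | zero =>
    intro m U _ hU
    have hU' : #U ≤ R := by simpa using hU
    simpa using card_indepSets_le_pow r U m R hU'
  | succ f ih =>
    intro m U hU hUR
    -- Each vertex of `U` is the first selected one in at most `M` independent sets.
    set M := (N + R) ^ f * R ^ m with hM
    have key : ∀ t : ℕ, ∀ U ⊆ U₀, #U = t → (#U : ℝ) * ρ ^ (f + 1) ≤ R →
        #(indepSets r U (f + m + 1)) ≤ t * M + R ^ (f + m + 1) := by
      intro t
      induction t with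
      | zero =>
        intro U _ hUt _
        have := card_indepSets_le_pow r U (f + m + 1) R (by omega)
        omega
      | succ t iht =>
        intro U hU hUt hUR
        by_cases hle : #U ≤ R
        · have := card_indepSets_le_pow r U (f + m + 1) R hle
          exact this.trans (Nat.le_add_left _ _)
        · obtain ⟨v, hv, hvd⟩ := hdeg U hU (not_le.1 hle)
          have h1 := iht (U.erase v) ((erase_subset _ _).trans hU)
            (by rw [card_erase_of_mem hv, hUt]; rfl)
            (le_trans (by gcongr; exact erase_subset _ _) hUR)
          have h2 := ih m {y ∈ U | y ≠ v ∧ ¬ r v y} ((filter_subset _ _).trans hU) (by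
            calc _ ≤ (ρ * #U) * ρ ^ f := by gcongr
              _ = #U * ρ ^ (f + 1) := by ring
              _ ≤ R := hUR)
          have h3 := card_indepSets_le_add r U (f + m) v
          rw [← hM] at h2
          nlinarith
    have h := key #U U hU rfl hUR
    have e : f + 1 + m = f + m + 1 := by ring
    rw [e]
    have hUN : #U ≤ N := (card_le_card hU).trans hN
    have hR : R ^ (f + m + 1) ≤ R * M := by
      rw [hM]
      calc R ^ (f + m + 1) = R * (R ^ f * R ^ m) := by ring
        _ ≤ R * ((N + R) ^ f * R ^ m) := by gcongr; omega
    calc _ ≤ #U * M + R ^ (f + m + 1) := h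
      _ ≤ N * M + R * M := by gcongr
      _ = (N + R) ^ (f + 1) * R ^ m := by rw [hM]; ring

/-! ### Lines through a point and arcs -/

open Classical in
/-- The direction of the line joining `s` to `x`: its slope, with `none` standing for the vertical
direction (and the junk value for `x = s`). -/
noncomputable def lineDir {F : Type*} [Field F] (s x : F × F) : Option F :=
  if x.1 = s.1 then none else some ((x.2 - s.2) / (x.1 - s.1))

theorem collinear_of_lineDir_eq {F : Type*} [Field F] {s x y : F × F}
    (h : lineDir s x = lineDir s y) : Collinear F ({s, x, y} : Set (F × F)) := by
  rw [collinear_iff_of_mem (p₀ := s) (by simp)]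
  unfold lineDir at h
  by_cases hx : x.1 = s.1
  · by_cases hy : y.1 = s.1
    · refine ⟨(0, 1), ?_⟩
      intro p hp
      refine ⟨p.2 - s.2, ?_⟩
      simp only [Set.mem_insert_iff, Set.mem_singleton_iff] at hp
      rcases hp with rfl | rfl | rfl <;> ext <;> simp [*]
    · simp [hx, hy] at h
  · by_cases hy : y.1 = s.1
    · simp [hx, hy] at h
    · simp only [hx, hy, if_false, Option.some.injEq] at h
      have hx' : x.1 - s.1 ≠ 0 := sub_ne_zero.2 hx
      have hy' : y.1 - s.1 ≠ 0 := sub_ne_zero.2 hy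
      refine ⟨(1, (x.2 - s.2) / (x.1 - s.1)), ?_⟩
      intro p hp
      refine ⟨p.1 - s.1, ?_⟩
      simp only [Set.mem_insert_iff, Set.mem_singleton_iff] at hp
      rcases hp with rfl | rfl | rfl
      · ext <;> simp
      · ext
        · simp
        · simp; field_simp; ring
      · rw [h]
        ext
        · simp
        · simp; field_simp; ring

open Classical in
/-- A line meets an arc in at most two points. -/
theorem card_lineDir_eq_le_two {F : Type*} [Field F] {S : Finset (F × F)} (hS : IsArc F ↑S)
    {x y : F × F} (hxy : x ≠ y) : #{s ∈ S | lineDir s x = lineDir s y} ≤ 2 := by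
  by_contra hcon
  obtain ⟨a, b, c, ha, hb, hc, hab, hac, hbc⟩ := two_lt_card_iff.1 (not_le.1 hcon)
  simp only [mem_filter] at ha hb hc
  have hmem : ∀ s : F × F, lineDir s x = lineDir s y → s ∈ line[F, x, y] := fun s h =>
    (collinear_of_lineDir_eq h).mem_affineSpan_of_mem_of_ne (by simp) (by simp) (by simp) hxy
  exact hS a ha.1 b hb.1 c hc.1 hab hac hbc
    (collinear_triple_of_mem_affineSpan_pair (hmem a ha.2) (hmem b hb.2) (hmem c hc.2))

open Classical in
/-- The lines through `s` partition `U` into at most `q + 1` classes, so by Cauchy–Schwarz many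
pairs of points of `U` lie on a common line through `s`. -/
theorem sq_card_le_sum_lineDir {F : Type*} [Field F] [Fintype F] (s : F × F)
    (U : Finset (F × F)) (hU : 4 * Fintype.card F < #U) :
    #U ^ 2 ≤ 4 * Fintype.card F *
      ∑ v ∈ U, #{y ∈ U | y ≠ v ∧ lineDir s v = lineDir s y} := by
  have hq : 1 ≤ Fintype.card F := Fintype.card_pos
  have h1 : #U = ∑ d : Option F, #{y ∈ U | lineDir s y = d} :=
    card_eq_sum_card_fiberwise (fun _ _ => by simp)
  have h2 : #U ^ 2 ≤ (Fintype.card F + 1) * ∑ d : Option F, #{y ∈ U | lineDir s y = d} ^ 2 := by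
    conv_lhs => rw [h1]
    have := sq_sum_le_card_mul_sum_sq (s := (univ : Finset (Option F)))
      (f := fun d => #{y ∈ U | lineDir s y = d})
    simpa using this
  have h3 : ∑ d : Option F, #{y ∈ U | lineDir s y = d} ^ 2
      = ∑ v ∈ U, #{y ∈ U | lineDir s y = lineDir s v} := by
    rw [← sum_fiberwise_of_maps_to (s := U) (t := (univ : Finset (Option F)))
      (g := fun v => lineDir s v) (fun _ _ => by simp)]
    refine sum_congr rfl fun d _ => ?_
    rw [sum_congr rfl (g := fun _ => #{y ∈ U | lineDir s y = d}), sum_const, smul_eq_mul, sq]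
    intro v hv
    rw [(mem_filter.1 hv).2]
  have h4 : ∀ v ∈ U, #{y ∈ U | lineDir s y = lineDir s v}
      = #{y ∈ U | y ≠ v ∧ lineDir s v = lineDir s y} + 1 := by
    intro v hv
    rw [← card_erase_add_one (s := {y ∈ U | lineDir s y = lineDir s v}) (a := v) (by simp [hv])]
    congr 2
    ext y
    simp only [mem_erase, mem_filter]
    constructor
    · rintro ⟨a, b, c⟩; exact ⟨b, a, c.symm⟩
    · rintro ⟨a, b, c⟩; exact ⟨b, a, c.symm⟩
  rw [h3, sum_congr rfl h4, sum_add_distrib, sum_const, smul_eq_mul, mul_one] at h2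
  set Z := ∑ v ∈ U, #{y ∈ U | y ≠ v ∧ lineDir s v = lineDir s y}
  have h5 : 2 * ((Fintype.card F + 1) * #U) ≤ #U ^ 2 := by nlinarith
  nlinarith [Nat.mul_le_mul_right Z hq]

open Classical in
/-- For an arc `S`, join two points when their line passes through a point of `S`. In this graph
every large set `U` has a vertex of relative degree at least `|S| / (8 q)`. -/
theorem exists_high_degree {F : Type*} [Field F] [Fintype F] {S : Finset (F × F)}
    (hS : IsArc F ↑S) (U : Finset (F × F)) (hU : 4 * Fintype.card F < #U) :
    ∃ v ∈ U, (#{y ∈ U | y ≠ v ∧ ¬ ∃ s ∈ S, lineDir s v = lineDir s y} : ℝ)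
      ≤ Real.exp (-(#S / (8 * Fintype.card F) : ℝ)) * #U := by
  have hq : 1 ≤ Fintype.card F := Fintype.card_pos
  have hne : U.Nonempty := card_pos.1 (by omega)
  set deg : F × F → ℕ := fun v => #{y ∈ U | y ≠ v ∧ ∃ s ∈ S, lineDir s v = lineDir s y} with hdeg
  have h1 : ∀ v ∈ U, ∑ s ∈ S, #{y ∈ U | y ≠ v ∧ lineDir s v = lineDir s y} ≤ 2 * deg v := by
    intro v _
    have e : ∀ s ∈ S, #{y ∈ U | y ≠ v ∧ lineDir s v = lineDir s y}
        = #{y ∈ {y ∈ U | y ≠ v ∧ ∃ s ∈ S, lineDir s v = lineDir s y} |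
            lineDir s v = lineDir s y} := by
      intro s hs
      congr 1
      ext y
      simp only [mem_filter]
      constructor
      · rintro ⟨a, b, c⟩; exact ⟨⟨a, b, s, hs, c⟩, c⟩
      · rintro ⟨⟨a, b, _⟩, c⟩; exact ⟨a, b, c⟩
    rw [sum_congr rfl e]
    have := sum_card_bipartiteAbove_eq_sum_card_bipartiteBelow (s := S)
      (t := {y ∈ U | y ≠ v ∧ ∃ s ∈ S, lineDir s v = lineDir s y})
      (fun s y => lineDir s v = lineDir s y)
    simp only [bipartiteAbove, bipartiteBelow] at this
    rw [this, mul_comm, ← smul_eq_mul]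
    refine sum_le_card_nsmul _ _ _ fun y hy => ?_
    exact card_lineDir_eq_le_two hS (mem_filter.1 hy).2.1.symm
  have h2 : ∑ v ∈ U, #S * #U ≤ ∑ v ∈ U, 8 * Fintype.card F * deg v := by
    calc ∑ v ∈ U, #S * #U = ∑ s ∈ S, #U ^ 2 := by simp; ring
      _ ≤ ∑ s ∈ S, 4 * Fintype.card F *
          ∑ v ∈ U, #{y ∈ U | y ≠ v ∧ lineDir s v = lineDir s y} :=
        sum_le_sum fun s _ => sq_card_le_sum_lineDir s U hU
      _ = 4 * Fintype.card F *
          ∑ v ∈ U, ∑ s ∈ S, #{y ∈ U | y ≠ v ∧ lineDir s v = lineDir s y} := by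
        rw [← mul_sum, sum_comm]
      _ ≤ 4 * Fintype.card F * ∑ v ∈ U, 2 * deg v := Nat.mul_le_mul_left _ (sum_le_sum h1)
      _ = _ := by rw [mul_sum]; exact sum_congr rfl fun v _ => by ring
  obtain ⟨v, hv, hvd⟩ := exists_le_of_sum_le hne h2
  refine ⟨v, hv, ?_⟩
  have h3 : #{y ∈ U | y ≠ v ∧ ¬ ∃ s ∈ S, lineDir s v = lineDir s y} + deg v ≤ #U := by
    rw [hdeg, ← card_union_of_disjoint]
    · exact card_le_card (union_subset (filter_subset _ _) (filter_subset _ _))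
    · rw [disjoint_left]
      intro y hy hy'
      exact (mem_filter.1 hy).2.2 (mem_filter.1 hy').2.2
  have h3' : (#{y ∈ U | y ≠ v ∧ ¬ ∃ s ∈ S, lineDir s v = lineDir s y} : ℝ) + deg v ≤ #U := by
    exact_mod_cast h3
  have h4 : (#S : ℝ) * #U ≤ 8 * Fintype.card F * deg v := by exact_mod_cast hvd
  have hqR : (0 : ℝ) < 8 * Fintype.card F := by positivity
  have h5 : (#S / (8 * Fintype.card F) : ℝ) * #U ≤ deg v := by
    rw [div_mul_eq_mul_div, div_le_iff₀ hqR]; linarith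
  have h6 := Real.add_one_le_exp (-(#S / (8 * Fintype.card F) : ℝ))
  have h7 : (0 : ℝ) ≤ #U := by positivity
  nlinarith [mul_le_mul_of_nonneg_right h6 h7]

open Classical in
/-- The arcs in `F²` with `k` points. -/
noncomputable def arcs (F : Type*) [Field F] [Fintype F] (k : ℕ) : Finset (Finset (F × F)) :=
  {A ∈ powersetCard k univ | IsArc F ↑A}

/-- After fixing `s` points `S` of an arc, the remaining points are independent in the graph of
`exists_high_degree`, to which the Kleitman–Winston bound applies. -/
theorem card_arcs_le {F : Type*} [Field F] [Fintype F] (s f m : ℕ)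
    (hf : (Fintype.card F : ℝ) * Real.exp (-(s / (8 * Fintype.card F) : ℝ)) ^ f ≤ 4) :
    #(arcs F (s + (f + m))) ≤ (Fintype.card F ^ 2) ^ s *
      ((Fintype.card F ^ 2 + 4 * Fintype.card F) ^ f * (4 * Fintype.card F) ^ m) := by
  classical
  have hsub : arcs F (s + (f + m)) ⊆ (arcs F s).biUnion fun S =>
      (indepSets (fun x y => ∃ p ∈ S, lineDir p x = lineDir p y) (univ \ S) (f + m)).image
        (fun I => S ∪ I) := by
    intro A hA
    obtain ⟨hAc, hArc⟩ := mem_filter.1 hA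
    have hAc := (mem_powersetCard.1 hAc).2
    obtain ⟨S, hSA, hSc⟩ := exists_subset_card_eq (s := A) (n := s) (by omega)
    refine mem_biUnion.2 ⟨S, mem_filter.2 ⟨mem_powersetCard.2 ⟨subset_univ _, hSc⟩, ?_⟩,
      mem_image.2 ⟨A \ S, ?_, union_sdiff_of_subset hSA⟩⟩
    · intro a ha b hb c hc
      exact hArc a (hSA ha) b (hSA hb) c (hSA hc)
    · refine mem_indepSets.2 ⟨⟨sdiff_subset_sdiff (subset_univ _) le_rfl, ?_⟩, ?_⟩
      · rw [card_sdiff_of_subset hSA]; omega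
      · rintro x hx y hy hxy ⟨p, hp, hpe⟩
        obtain ⟨hxA, hxS⟩ := mem_sdiff.1 hx
        obtain ⟨hyA, hyS⟩ := mem_sdiff.1 hy
        exact hArc p (hSA hp) x hxA y hyA (fun h => hxS (h ▸ hp)) (fun h => hyS (h ▸ hp)) hxy
          (collinear_of_lineDir_eq hpe)
  have hcard : Fintype.card (F × F) = Fintype.card F ^ 2 := by rw [Fintype.card_prod, sq]
  refine (card_le_card hsub).trans ((card_biUnion_le_card_mul _ _ _ fun S hS => ?_).trans
    (Nat.mul_le_mul_right _ ?_))
  · obtain ⟨hSc, hArc⟩ := mem_filter.1 hS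
    have hSc := (mem_powersetCard.1 hSc).2
    have hle : #(univ \ S) ≤ Fintype.card F ^ 2 := by
      rw [← hcard]; exact card_le_univ _
    refine card_image_le.trans (card_indepSets_le _ (univ \ S) (Fintype.card F ^ 2)
      (4 * Fintype.card F) (Real.exp (-(s / (8 * Fintype.card F) : ℝ))) (Real.exp_pos _) hle
      ?_ f m _ le_rfl ?_)
    · intro U _ hU
      obtain ⟨v, hv, h⟩ := exists_high_degree hArc U hU
      rw [hSc] at h
      refine ⟨v, hv, ?_⟩
      convert h
    · have hle' : (#(univ \ S) : ℝ) ≤ (Fintype.card F : ℝ) ^ 2 := by exact_mod_cast hle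
      calc _ ≤ (Fintype.card F : ℝ) ^ 2 * Real.exp (-(s / (8 * Fintype.card F) : ℝ)) ^ f := by
            gcongr
        _ = (Fintype.card F : ℝ) *
            (Fintype.card F * Real.exp (-(s / (8 * Fintype.card F) : ℝ)) ^ f) := by ring
        _ ≤ (Fintype.card F : ℝ) * 4 := by gcongr
        _ = _ := by push_cast; ring
  · calc #(arcs F s) ≤ #(powersetCard s (univ : Finset (F × F))) := card_filter_le _ _
      _ = (Fintype.card F ^ 2).choose s := by rw [card_powersetCard, card_univ, hcard]
      _ ≤ _ := Nat.choose_le_pow _ _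

open Classical in
/-- The collinear quadruples in `F²`. -/
noncomputable def collinearQuads (F : Type*) [Field F] [Fintype F] : Finset (Finset (F × F)) :=
  {A ∈ powersetCard 4 univ | Collinear F (A : Set (F × F))}

theorem card_collinearQuads_le (F : Type*) [Field F] [Fintype F] :
    #(collinearQuads F) ≤ Fintype.card F ^ 6 := by
  classical
  have hsub : collinearQuads F ⊆ (univ : Finset ((F × F) × (F × F) × F × F)).image
      fun w => {w.1, w.2.1, AffineMap.lineMap w.1 w.2.1 w.2.2.1,
        AffineMap.lineMap w.1 w.2.1 w.2.2.2} := by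
    intro A hA
    obtain ⟨hAc, hcol⟩ := mem_filter.1 hA
    obtain ⟨a, b, c, d, hab, -, -, -, -, -, rfl⟩ := card_eq_four.1 (mem_powersetCard.1 hAc).2
    have hmem : ∀ p ∈ ({a, b, c, d} : Finset (F × F)), ∃ t : F, AffineMap.lineMap a b t = p := by
      intro p hp
      exact mem_affineSpan_pair_iff_exists_lineMap_eq.1
        (hcol.mem_affineSpan_of_mem_of_ne (by simp) (by simp) (mem_coe.2 hp) hab)
    obtain ⟨t, ht⟩ := hmem c (by simp)
    obtain ⟨u, hu⟩ := hmem d (by simp)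
    exact mem_image.2 ⟨(a, b, t, u), mem_univ _, by simp [ht, hu]⟩
  refine (card_le_card hsub).trans (card_image_le.trans ?_)
  rw [card_univ]
  simp only [Fintype.card_prod]
  exact le_of_eq (by ring)

/-! ### Assembling the bounds -/

open Classical in
theorem maxArc_le_of_forall_not_subset {F : Type*} [Field F] [Fintype F] (k : ℕ)
    (P : Finset (F × F)) (h : ∀ A ∈ arcs F k, ¬ A ⊆ P) : maxArc F P ≤ k := by
  refine csSup_le ⟨0, ∅, by simp, by simp, fun a ha => by simp at ha⟩ ?_
  rintro j ⟨A, hAP, rfl, hA⟩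
  by_contra hlt
  obtain ⟨B, hBA, hBc⟩ := exists_subset_card_eq (s := A) (n := k) (by omega)
  exact h B (mem_filter.2 ⟨mem_powersetCard.2 ⟨subset_univ _, hBc⟩,
    fun a ha b hb c hc => hA a (hBA ha) b (hBA hb) c (hBA hc)⟩) (hBA.trans hAP)

/-- Deletion step: a random `n`-set with `8 n³ ≤ q²` contains few collinear quadruples and no arc
with `10 s` points, and one point is deleted from each quadruple. -/
theorem exists_set_of_small_arcs {F : Type*} [Field F] [Fintype F] (n s : ℕ)
    (hn0 : 0 < n) (hn : 8 * n ^ 3 ≤ Fintype.card F ^ 2) (hq : 2 ^ 19 ≤ Fintype.card F)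
    (hs : 1 ≤ s)
    (hf : (Fintype.card F : ℝ) * Real.exp (-(s / (8 * Fintype.card F) : ℝ)) ^ s ≤ 4) :
    ∃ P : Finset (F × F), n ≤ 2 * #P ∧ NoLCollinear F 4 P ∧ maxArc F P ≤ 10 * s := by
  classical
  set q := Fintype.card F with hqdef
  have hcard : Fintype.card (F × F) = q ^ 2 := by rw [Fintype.card_prod, sq]
  have hnq : n ≤ q := by
    by_contra hlt
    have h1 : q ^ 3 ≤ n ^ 3 := Nat.pow_le_pow_left (by omega) 3
    have h2 : q ^ 2 ≤ q ^ 3 := Nat.pow_le_pow_right (by omega) (by omega)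
    have h3 : 0 < n ^ 3 := by positivity
    omega
  have hnN : n ≤ Fintype.card (F × F) := by
    rw [hcard]; nlinarith
  have hX := card_collinearQuads_le F
  have hY := card_arcs_le (F := F) s s (8 * s) hf
  rw [← hqdef] at hX hY
  have hk : s + (s + 8 * s) = 10 * s := by ring
  rw [hk] at hY
  obtain ⟨P, hPc, hPX, hPY⟩ := exists_good_subset n (10 * s) 4 hnN hn0 (collinearQuads F)
    (arcs F (10 * s)) (fun K hK => (mem_powersetCard.1 (mem_filter.1 hK).1).2)
    (fun K hK => (mem_powersetCard.1 (mem_filter.1 hK).1).2)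
    (by
      rw [hcard]
      calc 4 * (#(collinearQuads F) * n ^ 4) ≤ 4 * (q ^ 6 * n ^ 4) := by gcongr
        _ = n * q ^ 6 * (4 * n ^ 3) := by ring
        _ ≤ n * q ^ 6 * q ^ 2 := by gcongr; omega
        _ = n * (q ^ 2) ^ 4 := by ring)
    (by
      rw [hcard]
      have h4 : 4 ≤ 4 ^ s := Nat.le_self_pow (by omega) 4
      have hq4 : q ^ 2 + 4 * q ≤ 2 * q ^ 2 := by nlinarith
      have h9 : n ^ 9 ≤ q ^ 6 := by
        calc n ^ 9 = (n ^ 3) ^ 3 := by ring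
          _ ≤ (q ^ 2) ^ 3 := Nat.pow_le_pow_left (by omega) 3
          _ = q ^ 6 := by ring
      calc 4 * (#(arcs F (10 * s)) * n ^ (10 * s))
          ≤ 4 ^ s * ((q ^ 2) ^ s * ((2 * q ^ 2) ^ s * (4 * q) ^ (8 * s)) * n ^ (10 * s)) := by
            refine Nat.mul_le_mul h4 (Nat.mul_le_mul_right _ (hY.trans ?_))
            gcongr
        _ = (2 ^ 19 * q ^ 12 * n ^ 9 * n) ^ s := by
            rw [pow_mul, pow_mul, ← mul_pow, ← mul_pow, ← mul_pow, ← mul_pow]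
            congr 1
            ring
        _ ≤ (q * q ^ 12 * q ^ 6 * q) ^ s := by gcongr
        _ = (q ^ 2) ^ (10 * s) := by
            rw [pow_mul]
            congr 1
            ring)
  have hg : ∀ K : Finset (F × F), ∃ x, K ∈ collinearQuads F → x ∈ K := by
    intro K
    by_cases hK : K ∈ collinearQuads F
    · have h4 := (mem_powersetCard.1 (mem_filter.1 hK).1).2
      obtain ⟨x, hx⟩ := card_pos.1 (by omega : 0 < #K)
      exact ⟨x, fun _ => hx⟩
    · exact ⟨0, fun h => absurd h hK⟩
  choose g hg using hg
  set B := ({K ∈ collinearQuads F | K ⊆ P}).image g with hB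
  have hBc : #B ≤ #{K ∈ collinearQuads F | K ⊆ P} := card_image_le
  refine ⟨P \ B, ?_, ?_, ?_⟩
  · have := le_card_sdiff B P
    omega
  · intro A hA hAc hcol
    have hAX : A ∈ collinearQuads F :=
      mem_filter.2 ⟨mem_powersetCard.2 ⟨subset_univ _, hAc⟩, hcol⟩
    have h1 := mem_sdiff.1 (hA (hg A hAX))
    exact h1.2 (mem_image.2 ⟨A, mem_filter.2 ⟨hAX, hA.trans sdiff_subset⟩, rfl⟩)
  · exact maxArc_le_of_forall_not_subset _ _ fun A hA hsub =>
      hPY A hA (hsub.trans sdiff_subset)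

theorem balogh_solymosi_analogue :
    ∀ δ : ℝ, 0 < δ → ∃ c : ℝ, 0 < c ∧ ∃ q₀ : ℕ,
      ∀ (F : Type) [Field F] [Fintype F], q₀ ≤ Fintype.card F →
      ∃ P : Finset (F × F),
        c * (Fintype.card F : ℝ) ^ ((2 : ℝ) / 3) ≤ (P.card : ℝ) ∧
        NoLCollinear F 4 P ∧
        (maxArc F P : ℝ) ≤ (P.card : ℝ) ^ ((3 : ℝ) / 4 + δ) := by
  intro δ hδ
  refine ⟨1 / 8, by norm_num, ?_⟩
  have hlog : ∀ᶠ x : ℝ in Filter.atTop, Real.log x ≤ 1 / 8 * x ^ (2 * δ / 3) := by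
    have h := (isLittleO_log_rpow_atTop (by positivity : (0 : ℝ) < 2 * δ / 3)).bound
      (by norm_num : (0 : ℝ) < 1 / 8)
    filter_upwards [h, Filter.eventually_ge_atTop 1] with x hx hx1
    rw [Real.norm_of_nonneg (Real.log_nonneg hx1),
      Real.norm_of_nonneg (by positivity)] at hx
    exact hx
  have hbig : ∀ᶠ x : ℝ in Filter.atTop, 20 * 8 ^ ((3 : ℝ) / 4 + δ) ≤ x ^ (δ / 3) :=
    (tendsto_rpow_atTop (by positivity : 0 < δ / 3)).eventually_ge_atTop _
  have hev := tendsto_natCast_atTop_atTop (R := ℝ) |>.eventually (hlog.and hbig)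
  obtain ⟨q₁, hq₁⟩ := Filter.eventually_atTop.1 hev
  refine ⟨max q₁ (2 ^ 19), fun F _ _ hF => ?_⟩
  obtain ⟨hlogq, hbigq⟩ := hq₁ _ (le_of_max_le_left hF)
  have hq19 : 2 ^ 19 ≤ Fintype.card F := le_of_max_le_right hF
  set q := Fintype.card F with hqdef
  have hq19R : (2 : ℝ) ^ 19 ≤ q := by exact_mod_cast hq19
  have hq1 : (1 : ℝ) ≤ q := le_trans (by norm_num) hq19R
  have hq0 : (0 : ℝ) < q := by linarith
  -- `y = q^(2/3)` and `z = q^(1/2 + δ/3)` are the orders of magnitude of `P` and of its arcs.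
  set y : ℝ := (q : ℝ) ^ ((2 : ℝ) / 3) with hy
  set z : ℝ := (q : ℝ) ^ ((1 : ℝ) / 2 + δ / 3) with hz
  have hy3 : y ^ 3 = (q : ℝ) ^ 2 := by
    rw [hy, ← Real.rpow_natCast, ← Real.rpow_mul hq0.le, ← Real.rpow_natCast]
    norm_num
  have hy4 : 4 ≤ y := by
    by_contra hlt
    have h0 : 0 ≤ y := by positivity
    have : y ^ 3 ≤ 4 ^ 3 := pow_le_pow_left₀ h0 (not_le.1 hlt).le 3
    nlinarith
  have hz1 : 1 ≤ z := Real.one_le_rpow hq1 (by positivity)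
  have hzz : z * z = q * (q : ℝ) ^ (2 * δ / 3) := by
    rw [hz, ← Real.rpow_add hq0]
    nth_rewrite 2 [← Real.rpow_one (q : ℝ)]
    rw [← Real.rpow_add hq0]
    congr 1
    ring
  have hn1 := Nat.floor_le (by positivity : (0 : ℝ) ≤ y / 2)
  have hn2 := Nat.lt_floor_add_one (y / 2)
  set n := ⌊y / 2⌋₊ with hn
  have hs1 := Nat.le_ceil z
  have hs2 := Nat.ceil_lt_add_one (by positivity : (0 : ℝ) ≤ z)
  set s := ⌈z⌉₊ with hs
  have hn0 : 0 < n := by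
    have : (0 : ℝ) < n := by linarith
    exact_mod_cast this
  have hn8 : 8 * n ^ 3 ≤ q ^ 2 := by
    have h := pow_le_pow_left₀ (by positivity : (0 : ℝ) ≤ n) hn1 3
    have : (8 : ℝ) * n ^ 3 ≤ q ^ 2 := by
      rw [← hy3]
      calc (8 : ℝ) * n ^ 3 ≤ 8 * (y / 2) ^ 3 := by gcongr
        _ = y ^ 3 := by ring
    exact_mod_cast this
  have hs0 : 1 ≤ s := by
    have : (1 : ℝ) ≤ s := hz1.trans hs1
    exact_mod_cast this
  have hf : (q : ℝ) * Real.exp (-(s / (8 * q) : ℝ)) ^ s ≤ 4 := by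
    have hss : (q : ℝ) * (q : ℝ) ^ (2 * δ / 3) ≤ s * s := by
      rw [← hzz]; gcongr
    have hl : Real.log q ≤ s * (s / (8 * q)) := by
      refine hlogq.trans ?_
      rw [mul_div_assoc', le_div_iff₀ (by positivity)]
      linarith
    rw [← Real.exp_nat_mul]
    have : Real.exp (s * -(s / (8 * q) : ℝ)) ≤ (q : ℝ)⁻¹ := by
      rw [← Real.exp_log (inv_pos.2 hq0), Real.log_inv]
      exact Real.exp_le_exp.2 (by linarith)
    calc _ ≤ (q : ℝ) * (q : ℝ)⁻¹ := by gcongr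
      _ = 1 := mul_inv_cancel₀ hq0.ne'
      _ ≤ 4 := by norm_num
  obtain ⟨P, hP, hP4, hPa⟩ := exists_set_of_small_arcs (F := F) n s hn0 hn8 hq19 hs0 hf
  have hPR : (n : ℝ) ≤ 2 * #P := by exact_mod_cast hP
  have hPy : 1 / 8 * y ≤ #P := by linarith
  refine ⟨P, hPy, hP4, ?_⟩
  have hPaR : (maxArc F P : ℝ) ≤ 10 * s := by exact_mod_cast hPa
  have h8 : (0 : ℝ) < 8 ^ ((3 : ℝ) / 4 + δ) := by positivity
  have hyz : y ^ ((3 : ℝ) / 4 + δ) = z * (q : ℝ) ^ (δ / 3) := by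
    rw [hy, hz, ← Real.rpow_mul hq0.le, ← Real.rpow_add hq0]
    congr 1
    ring
  calc (maxArc F P : ℝ) ≤ 20 * z := by linarith
    _ ≤ (y / 8) ^ ((3 : ℝ) / 4 + δ) := by
      rw [Real.div_rpow (by positivity) (by norm_num), le_div_iff₀ h8, hyz]
      nlinarith
    _ ≤ (P.card : ℝ) ^ ((3 : ℝ) / 4 + δ) :=
      Real.rpow_le_rpow (by positivity) (by linarith) (by positivity)
end

section
/- There exists an absolute constant c > 0 such that for every finite field F, every integer l ≥ 4, and every finite subset P ⊆ F² containing no l distinct collinear points, one has a(P) ≥ c · |P|^{1/2} / l^{1/2}. -/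
/-!
Let `A ⊆ P` be an arc of maximum size `k`. By maximality, every point of `P` lies on a line spanned
by two points of `A` (a point of `A` lies on the degenerate line through itself). There are at most
`k²` such lines, each meeting `P` in fewer than `l` points, so `|P| ≤ k² l`; the theorem follows
with `c = 1`.
-/

open Finset MeasureTheory
open scoped NNReal ENNReal

theorem exists_arc_card_eq_maxArc (F : Type*) [Field F] (P : Finset (F × F)) :
    ∃ A : Finset (F × F), A ⊆ P ∧ A.card = maxArc F P ∧ IsArc F ↑A := by
  refine Nat.sSup_mem (s := {k : ℕ | ∃ s : Finset (F × F), s ⊆ P ∧ s.card = k ∧ IsArc F ↑s})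
    ⟨0, ∅, by simp, by simp, by simp [IsArc]⟩ ⟨P.card, ?_⟩
  rintro k ⟨s, hs, rfl, -⟩
  exact Finset.card_le_card hs

theorem card_le_maxArc {F : Type*} [Field F] {P A : Finset (F × F)} (hA : A ⊆ P)
    (h : IsArc F (↑A : Set (F × F))) : A.card ≤ maxArc F P := by
  refine le_csSup ⟨P.card, ?_⟩ ⟨A, hA, rfl, h⟩
  rintro k ⟨s, hs, rfl, -⟩
  exact Finset.card_le_card hs

/-- A point whose addition destroys an arc lies on a line spanned by two points of the arc. -/
theorem exists_mem_line_of_not_isArc_insert {F : Type*} [Field F] {A : Set (F × F)} {p : F × F}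
    (hA : IsArc F A) (h : ¬ IsArc F (insert p A)) :
    ∃ a ∈ A, ∃ b ∈ A, p ∈ line[F, a, b] := by
  unfold IsArc at h
  push Not at h
  obtain ⟨x, hx, y, hy, z, hz, hxy, hxz, hyz, hc⟩ := h
  rcases hx with rfl | hx
  · exact ⟨y, hy.resolve_left hxy.symm, z, hz.resolve_left hxz.symm,
      hc.mem_affineSpan_of_mem_of_ne (by simp) (by simp) (by simp) hyz⟩
  rcases hy with rfl | hy
  · exact ⟨x, hx, z, hz.resolve_left hyz.symm,
      hc.mem_affineSpan_of_mem_of_ne (by simp) (by simp) (by simp) hxz⟩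
  rcases hz with rfl | hz
  · exact ⟨x, hx, y, hy, hc.mem_affineSpan_of_mem_of_ne (by simp) (by simp) (by simp) hxy⟩
  · exact absurd hc (hA x hx y hy z hz hxy hxz hyz)

open Classical in
/-- Includes the degenerate case `a = b`, where `line[F, a, b]` is a single point. -/
theorem card_filter_line_le {F : Type*} [Field F] {l : ℕ} {P : Finset (F × F)}
    (hP : NoLCollinear F l P) (a b : F × F) :
    (P.filter fun p => p ∈ line[F, a, b]).card ≤ l := by
  by_contra! hlt
  obtain ⟨s, hs, hcard⟩ := Finset.exists_subset_card_eq hlt.le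
  refine hP s (hs.trans (Finset.filter_subset _ _)) hcard ?_
  -- the direction of `line[F, a, b]` is the vector span of `{a, b}`, of rank at most one
  have hline : Collinear F (line[F, a, b] : Set (F × F)) := by
    have h := collinear_pair F a b
    rwa [Collinear, ← direction_affineSpan] at h
  exact hline.subset fun p hp => (Finset.mem_filter.1 (hs hp)).2

open Classical in
theorem card_le_maxArc_sq_mul {F : Type*} [Field F] {l : ℕ} {P : Finset (F × F)}
    (hP : NoLCollinear F l P) : P.card ≤ maxArc F P ^ 2 * l := by
  obtain ⟨A, hAP, hcard, hA⟩ := exists_arc_card_eq_maxArc F P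
  have hcover : P ⊆ (A ×ˢ A).biUnion fun q => P.filter fun p => p ∈ line[F, q.1, q.2] := by
    intro p hp
    obtain ⟨a, ha, b, hb, hab⟩ : ∃ a ∈ A, ∃ b ∈ A, p ∈ line[F, a, b] := by
      by_cases hpA : p ∈ A
      · exact ⟨p, hpA, p, hpA, left_mem_affineSpan_pair F p p⟩
      · refine exists_mem_line_of_not_isArc_insert hA fun harc => ?_
        rw [← Finset.coe_insert] at harc
        have := card_le_maxArc (Finset.insert_subset hp hAP) harc
        rw [Finset.card_insert_of_notMem hpA] at this
        omega
    exact Finset.mem_biUnion.2 ⟨(a, b), Finset.mk_mem_product ha hb, Finset.mem_filter.2 ⟨hp, hab⟩⟩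
  calc P.card ≤ _ := Finset.card_le_card hcover
    _ ≤ (A ×ˢ A).card * l :=
      Finset.card_biUnion_le_card_mul _ _ _ fun q _ => card_filter_line_le hP q.1 q.2
    _ = maxArc F P ^ 2 * l := by rw [Finset.card_product, hcard, sq]

theorem arc_in_no_l_collinear :
    ∃ c : ℝ, 0 < c ∧ ∀ (F : Type) [Field F], ∀ l : ℕ, 4 ≤ l →
      ∀ P : Finset (F × F), NoLCollinear F l P →
      c * Real.sqrt (P.card : ℝ) / Real.sqrt (l : ℝ) ≤ (maxArc F P : ℝ) := by
  refine ⟨1, one_pos, fun F _ l hl P hP => ?_⟩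
  have hl0 : (0 : ℝ) < l := by exact_mod_cast (by omega : 0 < l)
  have h : (P.card : ℝ) ≤ (maxArc F P : ℝ) ^ 2 * l := by
    exact_mod_cast card_le_maxArc_sq_mul hP
  rw [one_mul, div_le_iff₀ (Real.sqrt_pos.2 hl0)]
  calc Real.sqrt (P.card : ℝ) ≤ Real.sqrt ((maxArc F P : ℝ) ^ 2 * l) := Real.sqrt_le_sqrt h
    _ = maxArc F P * Real.sqrt l := by
      rw [Real.sqrt_mul (sq_nonneg _), Real.sqrt_sq (Nat.cast_nonneg _)]
end
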